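/- Let P be a range-restricted CHR program. If P is terminating in the ωe semantics, i.e. there is no infinite ↦e derivation from the ωe state ⟨𝔾; 𝔹; 𝕍⟩, then P is terminating in the ω! semantics from the corresponding initial state, i.e. there is no infinite ↦! derivation from the ω! state ⟨𝔾; ∅; 𝔹; 𝕍⟩. -/

import Mathlib

set_option autoImplicit false

/-! ## Syntax: variables, terms, constraints -/

/-- Variables -/
abbrev Var := ℕ

/-- First-order terms -/
inductive Term : Type
  | var : Var → Term
  | app : String → List Term → Term

mutual
  /-- Application of a substitution to a term -/
  def Term.subst (ρ : Var → Term) : Term → Term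
    | .var x => ρ x
    | .app f ts => .app f (Term.substList ρ ts)
  /-- Application of a substitution to a list of terms -/
  def Term.substList (ρ : Var → Term) : List Term → List Term
    | [] => []
    | t :: ts => Term.subst ρ t :: Term.substList ρ ts
end

mutual
  /-- Variables occurring in a term -/
  def Term.varList : Term → List Var
    | .var x => [x]
    | .app _ ts => Term.varLists ts
  /-- Variables occurring in a list of terms -/
  def Term.varLists : List Term → List Var
    | [] => []
    | t :: ts => Term.varList t ++ Term.varLists ts
end

/-- User-defined (CHR) constraints -/
structure UserC where
  name : String
  args : List Term

def UserC.subst (ρ : Var → Term) (c : UserC) : UserC := ⟨c.name, Term.substList ρ c.args⟩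
def UserC.varList (c : UserC) : List Var := Term.varLists c.args

/-- Built-in constraints: syntactic equality `≐`, theory-interpreted predicates, and falsum `⊥`.
    The empty conjunction plays the role of `⊤`. -/
inductive BAtom : Type
  | eq : Term → Term → BAtom
  | pred : String → List Term → BAtom
  | bfalse : BAtom

def BAtom.subst (ρ : Var → Term) : BAtom → BAtom
  | .eq s t => .eq (s.subst ρ) (t.subst ρ)
  | .pred p ts => .pred p (Term.substList ρ ts)
  | .bfalse => .bfalse

def BAtom.varList : BAtom → List Var
  | .eq s t => s.varList ++ t.varList
  | .pred _ ts => Term.varLists ts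
  | .bfalse => []

/-- A user-defined constraint store: a multiset of CHR constraints -/
abbrev UStore := Multiset UserC
/-- A built-in constraint store: a conjunction (multiset) of built-in atoms -/
abbrev BStore := Multiset BAtom

def UStore.vars (G : UStore) : Set Var := {x | ∃ c ∈ G, x ∈ c.varList}
def BStore.vars (B : BStore) : Set Var := {x | ∃ a ∈ B, x ∈ a.varList}
def UStore.subst (ρ : Var → Term) (G : UStore) : UStore := G.map (UserC.subst ρ)

/-- The single substitution [X/t] -/
def single (X : Var) (t : Term) : Var → Term := fun y => if y = X then t else .var y

/-- The falsum built-in store `⊥` -/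
def botStore : BStore := {BAtom.bfalse}

/-! ## The constraint theory CT -/

/-- A constraint theory: an interpretation of the built-in predicate symbols over the
    term model; `≐` is interpreted as syntactic equality and `⊥` as falsity. -/
structure CTheory where
  interp : String → List Term → Prop

/-- Satisfaction of a built-in atom under a valuation `ρ` -/
def CTheory.satAtom (I : CTheory) (ρ : Var → Term) : BAtom → Prop
  | .eq s t => s.subst ρ = t.subst ρ
  | .pred p ts => I.interp p (Term.substList ρ ts)
  | .bfalse => False

/-- Satisfaction of a conjunction of built-in atoms -/
def CTheory.sat (I : CTheory) (ρ : Var → Term) (B : BStore) : Prop := ∀ a ∈ B, I.satAtom ρ a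

/-- `CT ⊨ ∃ S. B ↔ ∃ S'. B'` : the stores `B`, `B'` are equivalent up to
    existential quantification of the variable sets `S`, `S'` respectively. -/
def CTheory.equivUpTo (I : CTheory) (S S' : Set Var) (B B' : BStore) : Prop :=
  ∀ ρ : Var → Term,
    (∃ ρ', (∀ x ∉ S, ρ' x = ρ x) ∧ I.sat ρ' B) ↔ (∃ ρ', (∀ x ∉ S', ρ' x = ρ x) ∧ I.sat ρ' B')

/-! ## CHR rules and programs -/

/-- A CHR rule `r @ kept \ removed ⇔ guard | bodyC, bodyB`.
    A propagation rule is one with `removed = []`. -/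
structure Rule where
  kept : List UserC
  removed : List UserC
  guard : List BAtom
  bodyC : List UserC
  bodyB : List BAtom

def ucsVarList (l : List UserC) : List Var := (l.map UserC.varList).flatten
def basVarList (l : List BAtom) : List Var := (l.map BAtom.varList).flatten

/-- All variables of a rule -/
def Rule.vars (r : Rule) : Set Var :=
  {x | x ∈ ucsVarList (r.kept ++ r.removed ++ r.bodyC) ++ basVarList (r.guard ++ r.bodyB)}

/-- The local variables of a rule: those of guard and body not occurring in the heads -/
def Rule.localVars (r : Rule) : Set Var :=
  {x | x ∈ basVarList r.guard ++ ucsVarList r.bodyC ++ basVarList r.bodyB} \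
    {x | x ∈ ucsVarList (r.kept ++ r.removed)}

/-- A rule is range-restricted iff it has no local variables -/
def Rule.RangeRestricted (r : Rule) : Prop := r.localVars = ∅

def Rule.map (θ : Var → Term) (r : Rule) : Rule :=
  ⟨r.kept.map (UserC.subst θ), r.removed.map (UserC.subst θ), r.guard.map (BAtom.subst θ),
   r.bodyC.map (UserC.subst θ), r.bodyB.map (BAtom.subst θ)⟩

/-- `r'` is a variant of `r`: it is obtained from `r` by renaming its variables
    with pairwise distinct variables -/
def Rule.IsVariantOf (r' r : Rule) : Prop :=
  ∃ ρ : Var → Var, Set.InjOn ρ r.vars ∧ r' = r.map (fun x => Term.var (ρ x))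

/-- A CHR program is a set of rules -/
abbrev Program := Set Rule
def Program.RangeRestricted (P : Program) : Prop := ∀ r ∈ P, r.RangeRestricted

/-! ## The equivalence-based operational semantics ωe -/

/-- An ωe state `⟨𝔾; 𝔹; 𝕍⟩` -/
structure StateE where
  uds : UStore
  bis : BStore
  glob : Set Var

/-- ωe state equivalence `≡e`: the smallest equivalence relation satisfying
    (1) equality as substitution, (2) CT-equivalent transformation of the built-in
    store up to strictly local variables, (3) omission of non-occurring global
    variables, (4) equivalence of failed states. -/
inductive EquivE (I : CTheory) : StateE → StateE → Prop
  | refl (σ : StateE) : EquivE I σ σ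
  | symm {σ τ : StateE} : EquivE I σ τ → EquivE I τ σ
  | trans {σ τ υ : StateE} : EquivE I σ τ → EquivE I τ υ → EquivE I σ υ
  | substEq (G : UStore) (B : BStore) (V : Set Var) (X : Var) (t : Term) :
      EquivE I ⟨G, BAtom.eq (.var X) t ::ₘ B, V⟩
               ⟨UStore.subst (single X t) G, BAtom.eq (.var X) t ::ₘ B, V⟩
  | builtin (G : UStore) (B B' : BStore) (V : Set Var) :
      I.equivUpTo (BStore.vars B \ (V ∪ UStore.vars G))
                  (BStore.vars B' \ (V ∪ UStore.vars G)) B B' →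
      EquivE I ⟨G, B, V⟩ ⟨G, B', V⟩
  | globalDrop (G : UStore) (B : BStore) (V : Set Var) (X : Var) :
      X ∉ UStore.vars G → X ∉ BStore.vars B →
      EquivE I ⟨G, B, insert X V⟩ ⟨G, B, V⟩
  | failed (G G' : UStore) (V : Set Var) : EquivE I ⟨G, botStore, V⟩ ⟨G', botStore, V⟩

/-- The ωe transition relation `↦e` (on `≡e`-equivalence classes, represented by
    states linked via `≡e` on both ends): application of a variant of a program rule
    whose local variables are fresh for the pre-transition state. -/
inductive StepE (I : CTheory) (P : Program) : StateE → StateE → Prop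
  | mk (σ τ : StateE) (r r' : Rule) (rest : UStore) (B : BStore) (V : Set Var) :
      r ∈ P → r'.IsVariantOf r →
      Disjoint r'.localVars (UStore.vars rest ∪ BStore.vars B ∪ V) →
      EquivE I σ ⟨↑r'.kept + ↑r'.removed + rest, ↑r'.guard + B, V⟩ →
      EquivE I ⟨↑r'.kept + ↑r'.bodyC + rest, ↑r'.guard + ↑r'.bodyB + B, V⟩ τ →
      StepE I P σ τ

/-! ## The operational semantics ω! with persistent constraints -/

/-- An ω! state `⟨𝕃; ℙ; 𝔹; 𝕍⟩` with linear store `𝕃` and persistent store `ℙ` -/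
structure StateB where
  lin : UStore
  per : UStore
  bis : BStore
  glob : Set Var

/-- ω! state equivalence `≡!`: the analogues of the `≡e` conditions (substitution
    acting on both stores, all failed states equivalent) together with contraction
    of the persistent store. -/
inductive EquivB (I : CTheory) : StateB → StateB → Prop
  | refl (σ : StateB) : EquivB I σ σ
  | symm {σ τ : StateB} : EquivB I σ τ → EquivB I τ σ
  | trans {σ τ υ : StateB} : EquivB I σ τ → EquivB I τ υ → EquivB I σ υ
  | substEq (L P : UStore) (B : BStore) (V : Set Var) (X : Var) (t : Term) :
      EquivB I ⟨L, P, BAtom.eq (.var X) t ::ₘ B, V⟩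
               ⟨UStore.subst (single X t) L, UStore.subst (single X t) P,
                BAtom.eq (.var X) t ::ₘ B, V⟩
  | builtin (L P : UStore) (B B' : BStore) (V : Set Var) :
      I.equivUpTo (BStore.vars B \ (V ∪ UStore.vars L ∪ UStore.vars P))
                  (BStore.vars B' \ (V ∪ UStore.vars L ∪ UStore.vars P)) B B' →
      EquivB I ⟨L, P, B, V⟩ ⟨L, P, B', V⟩
  | globalDrop (L P : UStore) (B : BStore) (V : Set Var) (X : Var) :
      X ∉ UStore.vars L → X ∉ UStore.vars P → X ∉ BStore.vars B →
      EquivB I ⟨L, P, B, insert X V⟩ ⟨L, P, B, V⟩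
  | failed (L P L' P' : UStore) (V V' : Set Var) :
      EquivB I ⟨L, P, botStore, V⟩ ⟨L', P', botStore, V'⟩
  | contract (L Q P : UStore) (B : BStore) (V : Set Var) :
      EquivB I ⟨L, Q + Q + P, B, V⟩ ⟨L, Q + P, B, V⟩

/-- The ω! transition relation `↦!` (on `≡!`-classes): **ApplyLinear** and
    **ApplyPersistent**, each subject to the irreflexivity condition `[σ] ≠ [τ]`. -/
inductive StepB (I : CTheory) (P : Program) : StateB → StateB → Prop
  | applyLinear (σ τ : StateB) (r r' : Rule) (H1l H1p H2l H2p rest perRest : UStore)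
      (B : BStore) (V : Set Var) :
      r ∈ P → r'.IsVariantOf r →
      (↑r'.kept : UStore) = H1l + H1p → (↑r'.removed : UStore) = H2l + H2p → H2l ≠ 0 →
      Disjoint r'.localVars
        (UStore.vars rest ∪ UStore.vars perRest ∪ BStore.vars B ∪ V) →
      EquivB I σ ⟨H1l + H2l + rest, H1p + H2p + perRest, ↑r'.guard + B, V⟩ →
      EquivB I ⟨H1l + ↑r'.bodyC + rest, H1p + H2p + perRest,
                ↑r'.guard + B + ↑r'.bodyB, V⟩ τ →
      ¬ EquivB I σ τ →
      StepB I P σ τ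
  | applyPersistent (σ τ : StateB) (r r' : Rule) (H1l H1p rest perRest : UStore)
      (B : BStore) (V : Set Var) :
      r ∈ P → r'.IsVariantOf r →
      (↑r'.kept : UStore) = H1l + H1p →
      Disjoint r'.localVars
        (UStore.vars rest ∪ UStore.vars perRest ∪ BStore.vars B ∪ V) →
      EquivB I σ ⟨H1l + rest, H1p + ↑r'.removed + perRest, ↑r'.guard + B, V⟩ →
      EquivB I ⟨H1l + rest, H1p + ↑r'.removed + ↑r'.bodyC + perRest,
                ↑r'.guard + B + ↑r'.bodyB, V⟩ τ →
      ¬ EquivB I σ τ →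
      StepB I P σ τ

/-! ## Helper lemmas -/

mutual
  theorem varList_rename (ρ : Var → Var) : ∀ t : Term,
      (Term.subst (fun x => Term.var (ρ x)) t).varList = t.varList.map ρ
    | .var x => by simp [Term.subst, Term.varList]
    | .app f ts => by
        simp only [Term.subst, Term.varList]
        exact varLists_rename ρ ts
  theorem varLists_rename (ρ : Var → Var) : ∀ ts : List Term,
      Term.varLists (Term.substList (fun x => Term.var (ρ x)) ts) = (Term.varLists ts).map ρ
    | [] => by simp [Term.substList, Term.varLists]
    | t :: ts => by
        simp only [Term.substList, Term.varLists, List.map_append]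
        rw [varList_rename ρ t, varLists_rename ρ ts]
end

theorem ucsVarList_rename (ρ : Var → Var) (l : List UserC) :
    ucsVarList (l.map (UserC.subst (fun x => Term.var (ρ x)))) = (ucsVarList l).map ρ := by
  induction l with
  | nil => simp [ucsVarList]
  | cons c l ih =>
    simp only [ucsVarList, List.map_cons, List.flatten_cons, List.map_append] at ih ⊢
    rw [ih]
    simp [UserC.varList, UserC.subst, varLists_rename]

theorem basVarList_rename (ρ : Var → Var) (l : List BAtom) :
    basVarList (l.map (BAtom.subst (fun x => Term.var (ρ x)))) = (basVarList l).map ρ := by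
  induction l with
  | nil => simp [basVarList]
  | cons c l ih =>
    simp only [basVarList, List.map_cons, List.flatten_cons, List.map_append] at ih ⊢
    rw [ih]
    cases c <;> simp [BAtom.varList, BAtom.subst, varLists_rename, varList_rename]

theorem localVars_variant {r r' : Rule} (h : r'.IsVariantOf r) (hr : r.RangeRestricted) :
    r'.localVars = ∅ := by
  obtain ⟨ρ, -, rfl⟩ := h
  unfold Rule.RangeRestricted at hr
  unfold Rule.localVars at hr ⊢
  rw [Set.sdiff_eq_empty] at hr ⊢
  intro x hx
  simp only [Rule.map, ← List.map_append, ucsVarList_rename, basVarList_rename,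
    Set.mem_ofPred_eq, List.mem_map] at hx ⊢
  obtain ⟨y, hy, rfl⟩ := hx
  exact ⟨y, hr hy, rfl⟩

/-- Satisfiability of a built-in store -/
def Satis (I : CTheory) (B : BStore) : Prop := ∃ ρ, I.sat ρ B

/-- Forgetting the persistent store -/
def StateB.proj (σ : StateB) : StateE := ⟨σ.lin, σ.bis, σ.glob⟩

/-- There is an infinite derivation from `e` -/
def NonTerm (I : CTheory) (P : Program) (e : StateE) : Prop :=
  ∃ f : ℕ → StateE, f 0 = e ∧ ∀ n : ℕ, StepE I P (f n) (f (n + 1))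

theorem NonTerm.cons {I : CTheory} {P : Program} {e e' : StateE} (h : StepE I P e e')
    (h' : NonTerm I P e') : NonTerm I P e := by
  obtain ⟨f, rfl, hf⟩ := h'
  refine ⟨fun n => Nat.casesOn n e f, rfl, fun n => ?_⟩
  cases n with
  | zero => exact h
  | succ n => exact hf n

theorem equivB_inv {I : CTheory} {σ τ : StateB} (h : EquivB I σ τ) :
    (Satis I σ.bis ↔ Satis I τ.bis) ∧
    (Satis I σ.bis → ((σ.per = 0 ↔ τ.per = 0) ∧ (σ.per = 0 → EquivE I σ.proj τ.proj))) := by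
  induction h with
  | refl σ => exact ⟨Iff.rfl, fun _ => ⟨Iff.rfl, fun _ => .refl _⟩⟩
  | symm _ ih =>
    exact ⟨ih.1.symm, fun hs => ⟨(ih.2 (ih.1.2 hs)).1.symm,
      fun hp => .symm ((ih.2 (ih.1.2 hs)).2 ((ih.2 (ih.1.2 hs)).1.2 hp))⟩⟩
  | trans _ _ ih1 ih2 =>
    refine ⟨ih1.1.trans ih2.1, fun hs => ?_⟩
    have a := ih1.2 hs
    have b := ih2.2 (ih1.1.1 hs)
    exact ⟨a.1.trans b.1, fun hp => .trans (a.2 hp) (b.2 (a.1.1 hp))⟩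
  | substEq L P B V X t =>
    exact ⟨Iff.rfl, fun _ => ⟨by simp [UStore.subst], fun _ => .substEq _ _ _ _ _⟩⟩
  | builtin L P B B' V h =>
    refine ⟨⟨fun ⟨ρ, hρ⟩ => ?_, fun ⟨ρ, hρ⟩ => ?_⟩, fun _ => ⟨Iff.rfl, fun hp => ?_⟩⟩
    · obtain ⟨ρ', -, h'⟩ := (h ρ).1 ⟨ρ, fun _ _ => rfl, hρ⟩
      exact ⟨ρ', h'⟩
    · obtain ⟨ρ', -, h'⟩ := (h ρ).2 ⟨ρ, fun _ _ => rfl, hρ⟩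
      exact ⟨ρ', h'⟩
    · have hp : P = 0 := hp
      subst hp
      have e : UStore.vars 0 = ∅ := by simp [UStore.vars]
      rw [e, Set.union_empty] at h
      exact .builtin _ _ _ _ h
  | globalDrop L P B V X h1 h2 h3 =>
    exact ⟨Iff.rfl, fun _ => ⟨Iff.rfl, fun _ => .globalDrop _ _ _ _ h1 h3⟩⟩
  | failed L P L' P' V V' =>
    refine ⟨Iff.rfl, fun ⟨ρ, hρ⟩ => ?_⟩
    exact (hρ BAtom.bfalse (by simp [botStore])).elim
  | contract L Q P B V =>
    exact ⟨Iff.rfl, fun _ => ⟨by simp, fun _ => .refl _⟩⟩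

theorem equivE_unsat {I : CTheory} {G G' : UStore} {B B' : BStore} {V : Set Var}
    (h : ¬ Satis I B) (h' : ¬ Satis I B') : EquivE I ⟨G, B, V⟩ ⟨G', B', V⟩ := by
  have key : ∀ (S S' : Set Var) (B B' : BStore), ¬ Satis I B → ¬ Satis I B' →
      I.equivUpTo S S' B B' := fun S S' B B' h h' ρ =>
    ⟨fun ⟨ρ', _, hs⟩ => (h ⟨ρ', hs⟩).elim, fun ⟨ρ', _, hs⟩ => (h' ⟨ρ', hs⟩).elim⟩
  have hb : ¬ Satis I botStore := fun ⟨ρ, hρ⟩ => hρ BAtom.bfalse (by simp [botStore])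
  exact .trans (.builtin _ _ _ _ (key _ _ _ _ h hb))
    (.trans (.failed _ _ _) (.builtin _ _ _ _ (key _ _ _ _ hb h')))

theorem nonTerm_of_unsat {I : CTheory} {P : Program} (hP : P.RangeRestricted) {r : Rule}
    (hr : r ∈ P) {e : StateE} (h : ¬ Satis I e.bis) : NonTerm I P e := by
  refine ⟨fun _ => e, rfl, fun _ => ?_⟩
  have hv : (r.map (fun x => Term.var (id x))).IsVariantOf r :=
    ⟨id, Function.injective_id.injOn, rfl⟩
  obtain ⟨G, B, V⟩ := e
  refine .mk _ _ r _ 0 B V hr hv ?_ (equivE_unsat h ?_) (equivE_unsat ?_ h)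
  · rw [localVars_variant hv (hP r hr)]
    exact Set.empty_disjoint _
  · exact fun ⟨ρ, hρ⟩ => h ⟨ρ, fun a ha => hρ a (Multiset.mem_add.2 (Or.inr ha))⟩
  · exact fun ⟨ρ, hρ⟩ => h ⟨ρ, fun a ha => hρ a (Multiset.mem_add.2 (Or.inr ha))⟩

theorem nonTerm_of_propagation {I : CTheory} {P : Program} (hP : P.RangeRestricted) {r r' : Rule}
    (hr : r ∈ P) (hv : r'.IsVariantOf r) (hrem : (↑r'.removed : UStore) = 0) {e : StateE}
    {rest : UStore} {B : BStore} {V : Set Var}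
    (he : EquivE I e ⟨↑r'.kept + rest, ↑r'.guard + B, V⟩) : NonTerm I P e := by
  have step : ∀ (e : StateE) (rest : UStore) (B : BStore),
      EquivE I e ⟨↑r'.kept + rest, ↑r'.guard + B, V⟩ →
      StepE I P e ⟨↑r'.kept + (↑r'.bodyC + rest), ↑r'.guard + (↑r'.bodyB + B), V⟩ := by
    intro e rest B he
    refine .mk _ _ r r' rest B V hr hv ?_ ?_ ?_
    · rw [localVars_variant hv (hP r hr)]
      exact Set.empty_disjoint _
    · rw [hrem, add_zero]
      exact he
    · rw [add_assoc, add_assoc]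
      exact .refl _
  refine NonTerm.cons (step e rest B he) ?_
  refine ⟨fun n => ⟨↑r'.kept + ((n + 1) • (↑r'.bodyC : UStore) + rest),
    ↑r'.guard + ((n + 1) • (↑r'.bodyB : BStore) + B), V⟩, by simp, fun n => ?_⟩
  have := step _ _ _ (.refl ⟨↑r'.kept + ((n + 1) • (↑r'.bodyC : UStore) + rest),
    ↑r'.guard + ((n + 1) • (↑r'.bodyB : BStore) + B), V⟩)
  rw [← add_assoc (↑r'.bodyC : UStore), ← add_assoc (↑r'.bodyB : BStore),
    ← succ_nsmul', ← succ_nsmul'] at this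
  exact this

theorem step_sim {I : CTheory} {P : Program} (hP : P.RangeRestricted) {σ τ : StateB}
    (h : StepB I P σ τ) (hT : ¬ NonTerm I P σ.proj) (hp : σ.per = 0) :
    StepE I P σ.proj τ.proj ∧ τ.per = 0 := by
  cases h with
  | applyLinear r r' H1l H1p H2l H2p rest perRest B V hr hv hk hrem hne hd h1 h2 hn =>
    have hs : Satis I σ.bis := by
      by_contra hs
      exact hT (nonTerm_of_unsat hP hr hs)
    obtain ⟨ha, hb⟩ := (equivB_inv h1).2 hs
    have hp' := ha.1 hp
    have he := hb hp
    simp only [add_eq_zero] at hp'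
    obtain ⟨⟨rfl, rfl⟩, rfl⟩ := hp'
    rw [add_zero] at hk hrem
    have hd' : Disjoint r'.localVars (UStore.vars rest ∪ BStore.vars B ∪ V) := by
      rw [localVars_variant hv (hP r hr)]
      exact Set.empty_disjoint _
    have mkStep : ∀ υ, EquivE I ⟨H1l + ↑r'.bodyC + rest, ↑r'.guard + B + ↑r'.bodyB, V⟩ υ →
        StepE I P σ.proj υ := by
      intro υ hυ
      refine .mk _ _ r r' rest B V hr hv hd' ?_ ?_
      · rw [hk, hrem]
        exact he
      · rw [hk, add_right_comm (↑r'.guard : BStore)]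
        exact hυ
    have hs2 : Satis I (↑r'.guard + B + ↑r'.bodyB) := by
      by_contra hs2
      exact hT (NonTerm.cons (mkStep _ (.refl _)) (nonTerm_of_unsat hP hr hs2))
    obtain ⟨hc, hd2⟩ := (equivB_inv h2).2 hs2
    exact ⟨mkStep _ (hd2 (by simp)), hc.1 (by simp)⟩
  | applyPersistent r r' H1l H1p rest perRest B V hr hv hk hd h1 h2 hn =>
    exfalso
    have hs : Satis I σ.bis := by
      by_contra hs
      exact hT (nonTerm_of_unsat hP hr hs)
    obtain ⟨ha, hb⟩ := (equivB_inv h1).2 hs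
    have hp' := ha.1 hp
    have he := hb hp
    simp only [add_eq_zero] at hp'
    obtain ⟨⟨rfl, hrem⟩, rfl⟩ := hp'
    rw [add_zero] at hk
    refine hT (nonTerm_of_propagation hP hr hv hrem (rest := rest) (B := B) (V := V) ?_)
    rw [hk]
    exact he

/-! ## Statement 6: ωe-termination implies ω!-termination -/

/-- **Preservation of termination.** If there is no infinite `↦e` derivation from the
    ωe state `⟨𝔾; 𝔹; 𝕍⟩` for a range-restricted program `P`, then there is no infinite
    `↦!` derivation from the corresponding ω! state `⟨𝔾; ∅; 𝔹; 𝕍⟩`. -/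
theorem omega_e_terminating_implies_omega_bang_terminating
    (I : CTheory) (P : Program) (hP : P.RangeRestricted)
    (G : UStore) (B : BStore) (V : Set Var)
    (hterm : ¬ ∃ f : ℕ → StateE,
        f 0 = ⟨G, B, V⟩ ∧ ∀ n : ℕ, StepE I P (f n) (f (n + 1))) :
    ¬ ∃ g : ℕ → StateB,
        g 0 = ⟨G, 0, B, V⟩ ∧ ∀ n : ℕ, StepB I P (g n) (g (n + 1)) := by
  rintro ⟨g, hg0, hg⟩
  have inv : ∀ n, ¬ NonTerm I P (g n).proj ∧ (g n).per = 0 := by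
    intro n
    induction n with
    | zero =>
      rw [hg0]
      exact ⟨hterm, rfl⟩
    | succ n ih =>
      obtain ⟨hs, hp⟩ := step_sim hP (hg n) ih.1 ih.2
      exact ⟨fun h => ih.1 (NonTerm.cons hs h), hp⟩
  refine hterm ⟨fun n => (g n).proj, ?_, fun n => (step_sim hP (hg n) (inv n).1 (inv n).2).1⟩
  simp only [hg0, StateB.proj]
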